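/- Let C be a compact metrizable topological space, p a Borel probability measure on C, f : C → ℝ a bounded measurable function, and ε > 0. Let φ : ℝ → (−∞, ∞] be convex and lower semicontinuous with φ(1) = 0 and φ(u) = +∞ for u < 0. Then for every λ ≥ 0, every b ∈ ℝ, and every Borel probability measure q on C with D_φ(q, p) ≤ ε, one has ∫ f dq ≥ b − λ·ε − ∫ (λφ)*(b − f(c)) dp(c), where (λφ)* denotes the convex conjugate of the function u ↦ λ·φ(u). -/

import Mathlib

/-!
The Fenchel–Young inequality `u * y - λ φ(u) ≤ (λφ)*(y)`, taken at `u = dq/dp` and `y = b - f`,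
is integrated against `p`; the change of measure `∫ (dq/dp) (b - f) dp = b - ∫ f dq` then gives the
bound. The only delicate point is the arithmetic of infinities. To avoid `∞ - ∞`, the inequality is
written with all negative parts moved across, as an inequality in `ℝ≥0∞`
(`fenchel_young_parts`), and integrated in that form (`lintegral_fenchel_young`).
The conjugate is bounded below by `b - f`, because `φ 1 = 0`, so its negative part is integrable.
If its positive part is not integrable the bound is trivial. Otherwise the pointwise inequality
controls the negative part of `λφ(dq/dp)` as well (`neg_part_le`), so for `λ > 0` the hypothesis on
the divergence makes `φ(dq/dp)` integrable and all terms are finite. For `λ = 0` the divergence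
plays no role.
-/

open MeasureTheory
open scoped ENNReal Classical

/-- The canonical map `EReal → ℝ≥0∞` sending negative values to `0` and `⊤` to `⊤`. -/
noncomputable def erealToENNReal (x : EReal) : ℝ≥0∞ :=
  if x = ⊤ then ⊤ else ENNReal.ofReal x.toReal

/-- Integral of an `EReal`-valued function: (lower) integral of the positive part minus
the (lower) integral of the negative part. -/
noncomputable def eIntegral {C : Type*} [MeasurableSpace C] (p : Measure C) (g : C → EReal) :
    EReal :=
  ((∫⁻ c, erealToENNReal (g c) ∂p : ℝ≥0∞) : EReal) -
    ((∫⁻ c, erealToENNReal (-(g c)) ∂p : ℝ≥0∞) : EReal)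

/-- The `φ`-divergence `D_φ(q, p) = ∫ φ(dq/dp) dp` when `q ≪ p`, and `⊤` otherwise. -/
noncomputable def fDiv {C : Type*} [MeasurableSpace C] (φ : ℝ → EReal) (q p : Measure C) :
    EReal :=
  if q ≪ p then eIntegral p (fun c => φ ((q.rnDeriv p c).toReal)) else ⊤

lemma erealToENNReal_eq (x : EReal) : erealToENNReal x = x.toENNReal := by
  unfold erealToENNReal EReal.toENNReal
  congr

lemma erealToENNReal_coe (x : ℝ) : erealToENNReal (x : EReal) = ENNReal.ofReal x := by
  simp [erealToENNReal]

lemma erealToENNReal_mono : Monotone erealToENNReal := by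
  intro x y h
  simp only [erealToENNReal_eq]
  exact EReal.toENNReal_le_toENNReal h

lemma measurable_erealToENNReal : Measurable erealToENNReal := by
  simp only [funext erealToENNReal_eq]
  exact measurable_ereal_toENNReal

/-- The inequality `x - l * v ≤ c`, with `x`, `v` and `c` split into positive and negative parts and
rearranged so that every term is added in `ℝ≥0∞`. -/
lemma fenchel_young_parts (x l : ℝ) (hl : 0 ≤ l) (v c : EReal) (hv : v ≠ ⊥) (hc : c ≠ ⊥)
    (h : (x : EReal) - (l : EReal) * v ≤ c) :
    ENNReal.ofReal x + erealToENNReal (-c) + ENNReal.ofReal l * erealToENNReal (-v) ≤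
      ENNReal.ofReal (-x) + ENNReal.ofReal l * erealToENNReal v + erealToENNReal c := by
  have real_parts (a : ℝ) : ENNReal.ofReal a = ENNReal.ofReal (max a 0) := by
    rw [ENNReal.ofReal, ENNReal.ofReal, Real.toNNReal_of_nonneg (le_max_right a 0)]
    rfl
  induction c with
  | bot => exact absurd rfl hc
  | top => simp [erealToENNReal]
  | coe c =>
    induction v with
    | bot => exact absurd rfl hv
    | top =>
      rcases hl.eq_or_lt with rfl | hl
      · simp only [EReal.coe_zero, zero_mul, sub_zero, EReal.coe_le_coe_iff] at h
        rw [← EReal.coe_neg, erealToENNReal_coe, erealToENNReal_coe, real_parts x,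
          real_parts (-c), real_parts (-x), real_parts c]
        simp only [ENNReal.ofReal_zero, zero_mul, add_zero]
        rw [← ENNReal.ofReal_add (le_max_right _ _) (le_max_right _ _),
          ← ENNReal.ofReal_add (le_max_right _ _) (le_max_right _ _)]
        apply ENNReal.ofReal_le_ofReal
        grind
      · simp [erealToENNReal, ENNReal.mul_top, hl]
    | coe v =>
      have h' : x - l * v ≤ c := by exact_mod_cast h
      simp only [← EReal.coe_neg, erealToENNReal_coe, ← ENNReal.ofReal_mul hl]
      rw [real_parts x, real_parts (-c), real_parts (-x), real_parts c, real_parts (l * v),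
        real_parts (l * -v)]
      simp only [← ENNReal.ofReal_add, le_max_right, add_nonneg]
      apply ENNReal.ofReal_le_ofReal
      have : l * -v = -(l * v) := by ring
      grind

/-- Bound of the negative part of `l * v` alone. It has to be derived pointwise: once
`fenchel_young_parts` is integrated, both parts of `v` may contribute `∞`. -/
lemma neg_part_le (x l : ℝ) (hl : 0 ≤ l) (v c : EReal) (hv : v ≠ ⊥) (hc : c ≠ ⊥)
    (h : (x : EReal) - (l : EReal) * v ≤ c) :
    ENNReal.ofReal l * erealToENNReal (-v) ≤ ENNReal.ofReal (-x) + erealToENNReal c := by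
  rcases le_total v 0 with h0 | h0
  · have hv0 : erealToENNReal v = 0 := by
      rw [erealToENNReal_eq, EReal.toENNReal_of_nonpos h0]
    have := fenchel_young_parts x l hl v c hv hc h
    rw [hv0, mul_zero, add_zero] at this
    exact le_add_self.trans this
  · have : erealToENNReal (-v) = 0 := by
      rw [erealToENNReal_eq, EReal.toENNReal_of_nonpos (by simpa using h0)]
    simp [this]

/-- The inequality `∫ x - l ∫ v ≤ ∫ g` in terms of positive and negative parts. The lower integral
is superadditive, so `g` need not be measurable. -/
lemma lintegral_fenchel_young {C : Type*} [MeasurableSpace C] (p : Measure C)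
    (x : C → ℝ) (hx : Measurable x) (l : ℝ) (hl : 0 ≤ l) (v g : C → EReal) (hv : Measurable v)
    (hvb : ∀ c, v c ≠ ⊥) (hg : ∀ c, g c ≠ ⊥)
    (h : ∀ c, (x c : EReal) - (l : EReal) * v c ≤ g c) :
    (∫⁻ c, ENNReal.ofReal (x c) ∂p) + (∫⁻ c, erealToENNReal (-g c) ∂p) +
        ENNReal.ofReal l * (∫⁻ c, erealToENNReal (-v c) ∂p) ≤
      (∫⁻ c, ENNReal.ofReal (-x c) ∂p) + ENNReal.ofReal l * (∫⁻ c, erealToENNReal (v c) ∂p) +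
        ∫⁻ c, erealToENNReal (g c) ∂p := by
  have mv : Measurable fun c => erealToENNReal (v c) := measurable_erealToENNReal.comp hv
  have mv' : Measurable fun c => erealToENNReal (-v c) := measurable_erealToENNReal.comp hv.neg
  rw [← lintegral_const_mul _ mv, ← lintegral_const_mul _ mv', ← lintegral_add_left (by fun_prop),
    ← lintegral_add_right _ (by fun_prop), ← lintegral_add_left (by fun_prop),
    ← lintegral_add_left (by fun_prop)]
  exact lintegral_mono fun c => fenchel_young_parts _ _ hl _ _ (hvb c) (hg c) (h c)

/-- A convex function that is `0` at `1` never takes the value `⊥`: otherwise it would be `⊥` at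
the midpoint `1` of `u` and `2 - u`, since `⊥ + ⊤ = ⊥`. -/
lemma ne_bot_of_convex (φ : ℝ → EReal)
    (hφconv : ∀ x y t : ℝ, 0 ≤ t → t ≤ 1 →
      φ (t * x + (1 - t) * y) ≤ (t : EReal) * φ x + ((1 - t : ℝ) : EReal) * φ y)
    (hφone : φ 1 = 0) (u : ℝ) : φ u ≠ ⊥ := by
  intro hu
  have h := hφconv u (2 - u) (1 / 2) (by norm_num) (by norm_num)
  rw [hu, EReal.coe_mul_bot_of_pos (by norm_num), EReal.bot_add,
    show (1 / 2 : ℝ) * u + (1 - 1 / 2) * (2 - u) = 1 by ring, hφone] at h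
  simp at h


/-- **Weak duality (Fenchel–Young direction) of Theorem 1.**
For every `λ ≥ 0`, every `b ∈ ℝ` and every Borel probability measure `q` on the compact
metrizable space `C` with `D_φ(q, p) ≤ ε`, one has
`∫ f dq ≥ b − λ·ε − ∫ (λφ)*(b − f c) dp(c)`, where `(λφ)*` is the convex conjugate of
`u ↦ λ·φ(u)`. -/
theorem drbo_phi_divergence_weak_duality
    {C : Type*} [TopologicalSpace C] [CompactSpace C]
    [TopologicalSpace.MetrizableSpace C] [MeasurableSpace C] [BorelSpace C]
    (p : Measure C) [IsProbabilityMeasure p]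
    (f : C → ℝ) (hf : Measurable f) (M : ℝ) (hfM : ∀ c, |f c| ≤ M)
    (φ : ℝ → EReal)
    (hφconv : ∀ x y t : ℝ, 0 ≤ t → t ≤ 1 →
      φ (t * x + (1 - t) * y) ≤ (t : EReal) * φ x + ((1 - t : ℝ) : EReal) * φ y)
    (hφlsc : LowerSemicontinuous φ)
    (hφone : φ 1 = 0)
    (hφneg : ∀ u : ℝ, u < 0 → φ u = ⊤)
    (ε : ℝ) (hε : 0 < ε)
    (lam : ℝ) (hlam : 0 ≤ lam) (b : ℝ)
    (q : Measure C) [IsProbabilityMeasure q] (hq : fDiv φ q p ≤ (ε : EReal)) :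
    ((∫ c, f c ∂q : ℝ) : EReal) ≥
      (b : EReal) - (lam : EReal) * (ε : EReal) -
        eIntegral p (fun c =>
          ⨆ u : ℝ, (((b - f c) * u : ℝ) : EReal) - (lam : EReal) * φ u) := by
  have hqp : q ≪ p := by
    by_contra hn
    simp [fDiv, hn] at hq
  rw [fDiv, if_pos hqp] at hq
  set r : C → ℝ := fun c => (q.rnDeriv p c).toReal with hr
  set g : C → EReal := fun c =>
    ⨆ u : ℝ, (((b - f c) * u : ℝ) : EReal) - (lam : EReal) * φ u with hgdef
  have hbot := ne_bot_of_convex φ hφconv hφone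
  have mr : Measurable r := (Measure.measurable_rnDeriv q p).ennreal_toReal
  have hfy (c : C) (u : ℝ) : (((b - f c) * u : ℝ) : EReal) - (lam : EReal) * φ u ≤ g c :=
    le_iSup (fun u : ℝ => (((b - f c) * u : ℝ) : EReal) - (lam : EReal) * φ u) u
  have hg1 (c : C) : ((b - f c : ℝ) : EReal) ≤ g c := by
    simpa [hφone] using hfy c 1
  have hgbot (c : C) : g c ≠ ⊥ := fun h => by
    have := hg1 c
    rw [h] at this
    exact EReal.coe_ne_bot _ (le_bot_iff.mp this)
  have hφr : Measurable fun c => φ (r c) := hφlsc.measurable.comp mr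
  have key := lintegral_fenchel_young p (fun c => (b - f c) * r c) (by fun_prop) lam hlam
    (fun c => φ (r c)) g hφr (fun c => hbot _) hgbot (fun c => hfy c (r c))
  have keyneg : ENNReal.ofReal lam * (∫⁻ c, erealToENNReal (-φ (r c)) ∂p) ≤
      (∫⁻ c, ENNReal.ofReal (-((b - f c) * r c)) ∂p) + ∫⁻ c, erealToENNReal (g c) ∂p := by
    have mneg : Measurable fun c => erealToENNReal (-φ (r c)) :=
      measurable_erealToENNReal.comp hφr.neg
    rw [← lintegral_const_mul _ mneg,
      ← lintegral_add_left (by fun_prop)]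
    exact lintegral_mono fun c => neg_part_le _ _ hlam _ _ (hbot _) (hgbot c) (hfy c (r c))
  -- Boundedness of `f` is what makes both sides of the change of measure integrable.
  have ifq : Integrable f q := Integrable.of_bound hf.aestronglyMeasurable M
    (.of_forall fun c => hfM c)
  have iyq : Integrable (fun c => b - f c) q := (integrable_const b).sub ifq
  have ixp : Integrable (fun c => (b - f c) * r c) p := by
    simpa [mul_comm] using (integrable_rnDeriv_smul_iff hqp).mpr iyq
  have hchange : ∫ c, (b - f c) * r c ∂p = b - ∫ c, f c ∂q := by
    have h1 := integral_rnDeriv_smul hqp (f := fun c => b - f c)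
    rw [integral_sub (integrable_const b) ifq] at h1
    simpa [mul_comm] using h1
  rw [integral_eq_lintegral_pos_part_sub_lintegral_neg_part ixp] at hchange
  have hG : ∫⁻ c, ENNReal.ofReal ((b - f c) * r c) ∂p ≠ ⊤ := ixp.lintegral_lt_top.ne
  have hH : ∫⁻ c, ENNReal.ofReal (-((b - f c) * r c)) ∂p ≠ ⊤ := ixp.neg.lintegral_lt_top.ne
  have hB1 : ∫⁻ c, erealToENNReal (-g c) ∂p ≠ ⊤ := by
    have ifp : Integrable f p := Integrable.of_bound hf.aestronglyMeasurable M
      (.of_forall fun c => hfM c)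
    have iyp : Integrable (fun c => -(b - f c)) p := ((integrable_const b).sub ifp).neg
    refine ne_top_of_le_ne_top iyp.lintegral_lt_top.ne (lintegral_mono fun c => ?_)
    rw [← erealToENNReal_coe, EReal.coe_neg]
    exact erealToENNReal_mono (EReal.neg_le_neg_iff.mpr (hg1 c))
  unfold eIntegral at hq ⊢
  generalize (∫⁻ c, ENNReal.ofReal ((b - f c) * r c) ∂p) = G at *
  generalize (∫⁻ c, ENNReal.ofReal (-((b - f c) * r c)) ∂p) = H at *
  generalize (∫⁻ c, erealToENNReal (-g c) ∂p) = B1 at *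
  generalize (∫⁻ c, erealToENNReal (g c) ∂p) = B2 at *
  generalize (∫⁻ c, erealToENNReal (φ (r c)) ∂p) = P2 at *
  generalize (∫⁻ c, erealToENNReal (-φ (r c)) ∂p) = P1 at *
  -- If the positive part of the conjugate is not integrable, the right-hand side is `⊥`.
  rcases eq_or_ne B2 ⊤ with rfl | hB2
  · lift B1 to NNReal using hB1
    have : ((⊤ : ℝ≥0∞) : EReal) - ((B1 : ℝ≥0∞) : EReal) = ⊤ := by
      rw [EReal.coe_ennreal_top]
      exact EReal.top_sub_coe B1
    rw [this, EReal.sub_top]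
    exact bot_le
  rcases hlam.eq_or_lt with rfl | hpos
  · lift G to NNReal using hG
    lift H to NNReal using hH
    lift B1 to NNReal using hB1
    lift B2 to NNReal using hB2
    simp only [ENNReal.ofReal_zero, zero_mul, add_zero] at key
    have key' : (G : ℝ) + B1 ≤ H + B2 := by exact_mod_cast key
    simp only [ENNReal.coe_toReal] at hchange
    have goal' : b - 0 * ε - ((B2 : ℝ) - B1) ≤ ∫ c, f c ∂q := by linarith
    simp only [EReal.coe_nnreal_eq_coe_real]
    exact_mod_cast goal'
  have hl0 : ENNReal.ofReal lam ≠ 0 := by simpa using hpos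
  -- The negative part of the divergence integrand is controlled by the conjugate.
  have hP1 : P1 ≠ ⊤ := by
    rintro rfl
    rw [ENNReal.mul_top hl0] at keyneg
    exact ENNReal.add_ne_top.mpr ⟨hH, hB2⟩ (top_le_iff.mp keyneg)
  have hP2 : P2 ≠ ⊤ := by
    rintro rfl
    lift P1 to NNReal using hP1
    rw [EReal.coe_ennreal_top] at hq
    have : (⊤ : EReal) - ((P1 : ℝ≥0∞) : EReal) = ⊤ := EReal.top_sub_coe P1
    rw [this] at hq
    simp at hq
  lift G to NNReal using hG
  lift H to NNReal using hH
  lift B1 to NNReal using hB1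
  lift B2 to NNReal using hB2
  lift P1 to NNReal using hP1
  lift P2 to NNReal using hP2
  simp only [EReal.coe_nnreal_eq_coe_real] at hq
  have hq' : (P2 : ℝ) - P1 ≤ ε := by exact_mod_cast hq
  have key' : (G : ℝ) + B1 + lam * P1 ≤ H + lam * P2 + B2 := by
    lift lam to NNReal using hlam
    rw [ENNReal.ofReal_coe_nnreal] at key
    exact_mod_cast key
  simp only [ENNReal.coe_toReal] at hchange
  have goal' : b - lam * ε - ((B2 : ℝ) - B1) ≤ ∫ c, f c ∂q := by
    nlinarith [mul_le_mul_of_nonneg_left hq' hlam]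
  simp only [EReal.coe_nnreal_eq_coe_real]
  exact_mod_cast goal'
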